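/- arXiv:1311.3631 — 2 statements merged into one kernel-verified Lean document; each statement's English description precedes it below -/
import Mathlib

section
/- Translation correctness for the pattern 'Ψ1 implies Ψ2 during following [a,b]' with an absolute interval: let π be a finite timed trace, Ψ1, Ψ2 state predicates on S, and 0 ≤ a ≤ b. Assume there is an index p with t_p = t_0 + a. Then π ⊨ X_{≤a} G_{≤b−a} (Ψ1 ⟹ Ψ2) if and only if for every index i with t_0 + a ≤ t_i ≤ t_0 + b, Ψ1(s_i) implies Ψ2(s_i). -/
/-- A finite timed trace: states `s 0, …, s n` with strictly increasing
time stamps `t 0 < t 1 < ⋯ < t n`. -/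
structure TTrace (S : Type*) where
  n : ℕ
  s : ℕ → S
  t : ℕ → ℝ
  mono : ∀ i, i < n → t i < t (i + 1)

/-- The suffix `π^i` of a timed trace. -/
def TTrace.suffix {S : Type*} (π : TTrace S) (i : ℕ) : TTrace S where
  n := π.n - i
  s := fun j => π.s (i + j)
  t := fun j => π.t (i + j)
  mono := fun j hj => π.mono (i + j) (by omega)

/-- A trace property is a predicate on timed traces. -/
abbrev TraceProp (S : Type*) := TTrace S → Prop

/-- A state predicate regarded as a trace property: it holds on `π` iff it holds in `s 0`. -/
def statePred {S : Type*} (Ψ : S → Prop) : TraceProp S := fun π => Ψ (π.s 0)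

/-- `π ⊨ G_{≤k} Φ` iff `π^i ⊨ Φ` for every index `i` with `t i ≤ t 0 + k`. -/
def Gle {S : Type*} (k : ℝ) (Φ : TraceProp S) : TraceProp S := fun π =>
  ∀ i, i ≤ π.n → π.t i ≤ π.t 0 + k → Φ (π.suffix i)

/-- `π ⊨ F_{≤k} Φ` iff `π^i ⊨ Φ` for some index `i` with `t i ≤ t 0 + k`. -/
def Fle {S : Type*} (k : ℝ) (Φ : TraceProp S) : TraceProp S := fun π =>
  ∃ i, i ≤ π.n ∧ π.t i ≤ π.t 0 + k ∧ Φ (π.suffix i)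

/-- `π ⊨ X_{≤k} Φ` iff `π^m ⊨ Φ` for `m` the largest index with `t m ≤ t 0 + k`. -/
noncomputable def Xle {S : Type*} (k : ℝ) (Φ : TraceProp S) : TraceProp S := fun π =>
  Φ (π.suffix (@Nat.findGreatest (fun i => π.t i ≤ π.t 0 + k) (Classical.decPred _) π.n))

def pImp {S : Type*} (Φ1 Φ2 : TraceProp S) : TraceProp S := fun π => Φ1 π → Φ2 π
def pNot {S : Type*} (Φ : TraceProp S) : TraceProp S := fun π => ¬ Φ π
def pAnd {S : Type*} (Φ1 Φ2 : TraceProp S) : TraceProp S := fun π => Φ1 π ∧ Φ2 π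
def pOr {S : Type*} (Φ1 Φ2 : TraceProp S) : TraceProp S := fun π => Φ1 π ∨ Φ2 π
def pTrue {S : Type*} : TraceProp S := fun _ => True
def pFalse {S : Type*} : TraceProp S := fun _ => False

namespace TTrace

variable {S : Type*} (π : TTrace S)

theorem strictMonoOn_t : StrictMonoOn π.t (Set.Iic π.n) :=
  strictMonoOn_Iic_of_lt_succ π.mono

theorem isGreatest_of_t_eq {p : ℕ} {r : ℝ} (hpn : p ≤ π.n) (hpr : π.t p = r) :
    IsGreatest {i | i ≤ π.n ∧ π.t i ≤ r} p := by
  refine ⟨⟨hpn, hpr.le⟩, fun i ⟨hin, hir⟩ => ?_⟩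
  exact (π.strictMonoOn_t.le_iff_le hin hpn).1 (hir.trans_eq hpr.symm)

theorem suffix_suffix (i j : ℕ) : (π.suffix i).suffix j = π.suffix (i + j) := by
  simp only [suffix, Nat.sub_sub, Nat.add_assoc]

end TTrace

section BoundedOperators

variable {S : Type*} {π : TTrace S} {k : ℝ}

theorem xle_iff_of_isGreatest {m : ℕ} (Φ : TraceProp S)
    (hm : IsGreatest {i | i ≤ π.n ∧ π.t i ≤ π.t 0 + k} m) :
    Xle k Φ π ↔ Φ (π.suffix m) := by
  obtain ⟨⟨hmn, hmk⟩, hmax⟩ := hm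
  have hfind :
      @Nat.findGreatest (fun i => π.t i ≤ π.t 0 + k) (Classical.decPred _) π.n = m :=
    Nat.findGreatest_eq_iff.2
      ⟨hmn, fun _ => hmk, fun _ hmi hin hik => hmi.not_ge (hmax ⟨hin, hik⟩)⟩
  rw [Xle, hfind]

theorem gle_suffix_iff {p : ℕ} (Φ : TraceProp S) (hp : p ≤ π.n) :
    Gle k Φ (π.suffix p) ↔
      ∀ i, i ≤ π.n → π.t p ≤ π.t i → π.t i ≤ π.t p + k → Φ (π.suffix i) := by
  constructor
  · intro h i hin hpi hik
    obtain ⟨j, rfl⟩ := Nat.exists_eq_add_of_le ((π.strictMonoOn_t.le_iff_le hp hin).1 hpi)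
    rw [← π.suffix_suffix]
    exact h j (Nat.le_sub_of_add_le' hin) hik
  · intro h j hj hjk
    have hpj : p + j ≤ π.n := Nat.add_le_of_le_sub' hp hj
    rw [π.suffix_suffix]
    exact h (p + j) hpj (π.strictMonoOn_t.monotoneOn hp hpj (Nat.le_add_right p j)) hjk

end BoundedOperators

theorem pattern_implies_during_following_general {S : Type*} (π : TTrace S) (Φ : TraceProp S)
    (a b : ℝ) (hp : ∃ p, p ≤ π.n ∧ π.t p = π.t 0 + a) :
    Xle a (Gle (b - a) Φ) π ↔
      ∀ i, i ≤ π.n → π.t 0 + a ≤ π.t i → π.t i ≤ π.t 0 + b → Φ (π.suffix i) := by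
  obtain ⟨p, hpn, hpt⟩ := hp
  have hend : π.t 0 + a + (b - a) = π.t 0 + b := by ring
  rw [xle_iff_of_isGreatest _ (π.isGreatest_of_t_eq hpn hpt), gle_suffix_iff Φ hpn, hpt, hend]

/-- translation correctness for 'Ψ1 implies Ψ2 during following [a,b]'
(absolute interval): assuming some index `p` has `t p = t 0 + a`,
`π ⊨ X_{≤a} G_{≤b−a} (Ψ1 ⟹ Ψ2)` iff for every index `i` with
`t 0 + a ≤ t i ≤ t 0 + b`, `Ψ1 (s i)` implies `Ψ2 (s i)`. -/
theorem pattern_implies_during_following {S : Type*} (π : TTrace S)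
    (Ψ1 Ψ2 : S → Prop) (a b : ℝ) (ha : 0 ≤ a) (hab : a ≤ b)
    (hp : ∃ p, p ≤ π.n ∧ π.t p = π.t 0 + a) :
    Xle a (Gle (b - a) (pImp (statePred Ψ1) (statePred Ψ2))) π ↔
      ∀ i, i ≤ π.n → π.t 0 + a ≤ π.t i → π.t i ≤ π.t 0 + b →
        (Ψ1 (π.s i) → Ψ2 (π.s i)) :=
  -- The two right-hand sides agree definitionally: `(π.suffix i).s 0` unfolds to `π.s (i + 0)`.
  pattern_implies_during_following_general π (pImp (statePred Ψ1) (statePred Ψ2)) a b hp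
end

section
/- Translation correctness for the sliding-interval pattern 'whenever Ψ1 occurs, Ψ2 does not occur during following [a,b]': let π be a finite timed trace, Ψ1, Ψ2 state predicates on S, and 0 ≤ a ≤ b ≤ k. Assume that for every index i with t_i ≤ t_0 + (k − b) there is an index m with t_m = t_i + a. Then π ⊨ G_{≤k−b}(Ψ1 ⟹ X_{≤a} G_{≤b−a} ¬Ψ2) if and only if for every index i with t_i ≤ t_0 + (k − b) at which Ψ1(s_i) holds, no index j with t_i + a ≤ t_j ≤ t_i + b satisfies Ψ2(s_j). -/
/-! At a triggering index `i`, the operator `X_{≤a}` jumps to the index `m` with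
`t m = t i + a`: the time stamps are strictly increasing, so `m` is the last index with
`t m ≤ t i + a`. From there `G_{≤b-a}` visits exactly the indices `j ≥ m` with
`t j ≤ t m + (b - a) = t i + b`, and `m ≤ j` means `t i + a ≤ t j`. -/

namespace TTrace

variable {S : Type*} (π : TTrace S)

variable {π}

theorem xle_iff_of_t_eq {a : ℝ} {Φ : TraceProp S} {m : ℕ} (hmn : m ≤ π.n)
    (htm : π.t m = π.t 0 + a) : Xle a Φ π ↔ Φ (π.suffix m) := by
  have hlast : @Nat.findGreatest (fun i => π.t i ≤ π.t 0 + a) (Classical.decPred _) π.n = m := by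
    classical
    refine Nat.findGreatest_eq_iff.mpr ⟨hmn, fun _ => htm.le, fun j hmj hjn => ?_⟩
    exact not_le.mpr (htm ▸ π.strictMonoOn_t hmn hjn hmj)
  rw [Xle, hlast]

theorem xle_suffix_iff_of_t_eq {a : ℝ} {Φ : TraceProp S} {i m : ℕ} (him : i ≤ m) (hmn : m ≤ π.n)
    (htm : π.t m = π.t i + a) : Xle a Φ (π.suffix i) ↔ Φ (π.suffix m) := by
  obtain ⟨d, rfl⟩ := Nat.exists_eq_add_of_le him
  have hd : d ≤ (π.suffix i).n := Nat.le_sub_of_add_le' hmn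
  rw [xle_iff_of_t_eq hd htm, suffix_suffix]

theorem gle_suffix_iff {c : ℝ} {Φ : TraceProp S} {m : ℕ} (hmn : m ≤ π.n) :
    Gle c Φ (π.suffix m) ↔ ∀ j, m ≤ j → j ≤ π.n → π.t j ≤ π.t m + c → Φ (π.suffix j) := by
  constructor
  · intro h j hmj hjn htj
    obtain ⟨e, rfl⟩ := Nat.exists_eq_add_of_le hmj
    exact π.suffix_suffix m e ▸ h e (Nat.le_sub_of_add_le' hjn) htj
  · intro h e he hte
    rw [suffix_suffix]
    exact h (m + e) (Nat.le_add_right m e) (Nat.add_le_of_le_sub' hmn he) hte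

theorem xle_gle_suffix_iff_of_t_eq {a c : ℝ} {Φ : TraceProp S} {i m : ℕ} (ha : 0 ≤ a)
    (hin : i ≤ π.n) (hmn : m ≤ π.n) (htm : π.t m = π.t i + a) :
    Xle a (Gle c Φ) (π.suffix i) ↔
      ∀ j, j ≤ π.n → π.t i + a ≤ π.t j → π.t j ≤ π.t i + a + c → Φ (π.suffix j) := by
  have him : i ≤ m := (π.strictMonoOn_t.le_iff_le hin hmn).mp (by linarith)
  rw [xle_suffix_iff_of_t_eq him hmn htm, gle_suffix_iff hmn, ← htm]
  refine forall_congr' fun j => ?_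
  rw [forall_comm]
  exact forall_congr' fun hjn => by rw [π.strictMonoOn_t.le_iff_le hmn hjn]

end TTrace

theorem pattern_sliding_not_occur_general {S : Type*} (π : TTrace S) (Φ₁ Φ₂ : TraceProp S)
    (a b k : ℝ) (ha : 0 ≤ a)
    (hm : ∀ i, i ≤ π.n → π.t i ≤ π.t 0 + k → Φ₁ (π.suffix i) →
      ∃ m, m ≤ π.n ∧ π.t m = π.t i + a) :
    Gle k (pImp Φ₁ (Xle a (Gle (b - a) (pNot Φ₂)))) π ↔
      ∀ i, i ≤ π.n → π.t i ≤ π.t 0 + k → Φ₁ (π.suffix i) →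
        ¬ ∃ j, j ≤ π.n ∧ π.t i + a ≤ π.t j ∧ π.t j ≤ π.t i + b ∧ Φ₂ (π.suffix j) := by
  refine forall₄_congr fun i hin hti hΦ₁ => ?_
  obtain ⟨m, hmn, htm⟩ := hm i hin hti hΦ₁
  have hend : π.t i + a + (b - a) = π.t i + b := by ring
  rw [TTrace.xle_gle_suffix_iff_of_t_eq ha hin hmn htm, hend]
  simp only [pNot, not_exists, not_and]

/-- translation correctness for the sliding-interval pattern
'whenever Ψ1 occurs, Ψ2 does not occur during following [a,b]':
`π ⊨ G_{≤k−b}(Ψ1 ⟹ X_{≤a} G_{≤b−a} ¬Ψ2)` iff for every index `i` with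
`t i ≤ t 0 + (k − b)` at which `Ψ1 (s i)` holds, no index `j` with
`t i + a ≤ t j ≤ t i + b` satisfies `Ψ2 (s j)`. -/
theorem pattern_sliding_not_occur {S : Type*} (π : TTrace S)
    (Ψ1 Ψ2 : S → Prop) (a b k : ℝ) (ha : 0 ≤ a) (hab : a ≤ b) (hbk : b ≤ k)
    (hm : ∀ i, i ≤ π.n → π.t i ≤ π.t 0 + (k - b) →
            ∃ m, m ≤ π.n ∧ π.t m = π.t i + a) :
    Gle (k - b) (pImp (statePred Ψ1) (Xle a (Gle (b - a) (pNot (statePred Ψ2))))) π ↔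
      ∀ i, i ≤ π.n → π.t i ≤ π.t 0 + (k - b) → Ψ1 (π.s i) →
        ¬ ∃ j, j ≤ π.n ∧ π.t i + a ≤ π.t j ∧ π.t j ≤ π.t i + b ∧ Ψ2 (π.s j) :=
  pattern_sliding_not_occur_general π (statePred Ψ1) (statePred Ψ2) a b (k - b) ha
    fun i hin hti _ => hm i hin hti
end
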